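/- Let G=(V,E) be a finite weighted graph, k ≥ 1 an integer with k+1 ≤ |V|, and 0 < ε < 1. If ρ(k+1) > (1+ε)·ρ(k), then there exist k pairwise disjoint nonempty subsets A_1,…,A_k of V such that for every 1 ≤ i ≤ k: φ(G[A_i]) ≥ ε·ρ(k+1)/7 and φ_G(A_i) ≤ ρ(k). -/

import Mathlib

open Finset

/-- Weighted degree of a vertex. -/
noncomputable def deg {V : Type*} [Fintype V] (w : V → V → ℝ) (v : V) : ℝ :=
  ∑ u, w v u

/-- Volume of a set of vertices. -/
noncomputable def vol {V : Type*} [Fintype V] (w : V → V → ℝ) (S : Finset V) : ℝ :=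
  ∑ v ∈ S, deg w v

/-- Total weight of edges from `S` to `T \ S`. -/
noncomputable def eW {V : Type*} [DecidableEq V] (w : V → V → ℝ) (S T : Finset V) : ℝ :=
  ∑ u ∈ S, ∑ v ∈ T \ S, w u v

/-- Conductance of `S` in `G`. -/
noncomputable def phi {V : Type*} [Fintype V] [DecidableEq V] (w : V → V → ℝ)
    (S : Finset V) : ℝ :=
  eW w S Finset.univ / vol w S

/-- Volume of `S ⊆ P` inside the induced subgraph `G[P]`. -/
noncomputable def volIn {V : Type*} [DecidableEq V] (w : V → V → ℝ) (P S : Finset V) : ℝ :=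
  ∑ v ∈ S, ∑ u ∈ P, w v u

/-- `φ(G[P]) ≥ a` : every nonempty proper `S ⊊ P` with at most half of the induced volume
has induced conductance at least `a` (stated multiplicatively). -/
def inCondGE {V : Type*} [DecidableEq V] (w : V → V → ℝ) (P : Finset V) (a : ℝ) : Prop :=
  ∀ S : Finset V, S ⊆ P → S.Nonempty → S ≠ P →
    volIn w P S ≤ volIn w P P / 2 → a * volIn w P S ≤ eW w S P

/-- `ρ(k)`: the minimum over families of `k` pairwise disjoint nonempty subsets of the
maximum conductance. -/
noncomputable def rho {V : Type*} [Fintype V] [DecidableEq V] (w : V → V → ℝ) (k : ℕ) : ℝ :=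
  sInf { r | ∃ A : Fin k → Finset V, (∀ i, (A i).Nonempty) ∧
    (∀ i j, i ≠ j → Disjoint (A i) (A j)) ∧ r = ⨆ i, phi w (A i) }

/-- The normalized Laplacian `I - D^{-1/2} A D^{-1/2}`. -/
noncomputable def normLap {V : Type*} [Fintype V] [DecidableEq V] (w : V → V → ℝ) : Matrix V V ℝ :=
  1 - Matrix.of fun u v => w u v / (Real.sqrt (deg w u) * Real.sqrt (deg w v))

/-- `lam w k` is the `k`-th smallest eigenvalue (1-indexed) of the normalized Laplacian. -/
noncomputable def lam {V : Type*} [Fintype V] [DecidableEq V] (w : V → V → ℝ) (k : ℕ) : ℝ :=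
  if h : (normLap w).IsHermitian then
    ((Finset.univ.val.map h.eigenvalues).sort (· ≤ ·)).getD (k - 1) 0
  else 0

/-!
Among the families of `k` disjoint sets of conductance at most `ρ(k)`, take one that is minimal for
inclusion, so that every nonempty proper subset of a part `P` has conductance above `ρ(k)`.
If `P` is cut into `S` and `T = P \ S`, the other parts together with `S` and `T` form a family of
`k + 1` sets, hence `S` or `T` has conductance at least `ρ(k + 1)`. The identity
`2 e(S, T) = (φ(S) - φ(P)) vol(S) + (φ(T) - φ(P)) vol(T)` then bounds `e(S, T)` from below by
`(ρ(k + 1) - ρ(k)) / 2` times the smaller of the two volumes inside `G[P]`.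
-/

section EdgeWeights

variable {V : Type*} [DecidableEq V] {w : V → V → ℝ}

theorem volIn_nonneg (hw : ∀ u v, 0 ≤ w u v) (P S : Finset V) : 0 ≤ volIn w P S :=
  sum_nonneg fun _ _ => sum_nonneg fun _ _ => hw _ _

theorem volIn_comm (hsym : ∀ u v, w u v = w v u) (P S : Finset V) :
    volIn w P S = volIn w S P := by
  unfold volIn
  rw [sum_comm]
  simp only [hsym]

theorem volIn_add_volIn_sdiff {S P : Finset V} (hSP : S ⊆ P) (Q : Finset V) :
    volIn w Q S + volIn w Q (P \ S) = volIn w Q P := by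
  rw [add_comm]
  exact sum_sdiff hSP

theorem eW_nonneg (hw : ∀ u v, 0 ≤ w u v) (S T : Finset V) : 0 ≤ eW w S T :=
  sum_nonneg fun _ _ => sum_nonneg fun _ _ => hw _ _

theorem eW_add_volIn_self {S P : Finset V} (hSP : S ⊆ P) :
    eW w S P + volIn w S S = volIn w P S := by
  unfold eW volIn
  rw [← sum_add_distrib]
  exact sum_congr rfl fun u _ => sum_sdiff hSP

theorem volIn_self_eq_add_two_mul_eW (hsym : ∀ u v, w u v = w v u) {S P : Finset V}
    (hSP : S ⊆ P) :
    volIn w P P = volIn w S S + volIn w (P \ S) (P \ S) + 2 * eW w S P := by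
  have hcut : volIn w (P \ S) S = eW w S P := rfl
  calc volIn w P P
    _ = volIn w P S + volIn w P (P \ S) := (volIn_add_volIn_sdiff hSP P).symm
    _ = volIn w P S + volIn w (P \ S) P := by rw [volIn_comm hsym P (P \ S)]
    _ = volIn w P S + (volIn w (P \ S) S + volIn w (P \ S) (P \ S)) := by
        rw [volIn_add_volIn_sdiff hSP (P \ S)]
    _ = volIn w S S + volIn w (P \ S) (P \ S) + 2 * eW w S P := by
        rw [← eW_add_volIn_self hSP, hcut]
        ring

theorem inCondGE.mono (hw : ∀ u v, 0 ≤ w u v) {P : Finset V} {a b : ℝ} (hab : a ≤ b)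
    (hP : inCondGE w P b) : inCondGE w P a := fun S hSP hS hne hhalf =>
  (mul_le_mul_of_nonneg_right hab (volIn_nonneg hw P S)).trans (hP S hSP hS hne hhalf)

end EdgeWeights

theorem vol_nonneg {V : Type*} [Fintype V] {w : V → V → ℝ} (hw : ∀ u v, 0 ≤ w u v)
    (S : Finset V) : 0 ≤ vol w S :=
  sum_nonneg fun _ _ => sum_nonneg fun _ _ => hw _ _

section Conductance

variable {V : Type*} [Fintype V] [DecidableEq V] {w : V → V → ℝ}

theorem volIn_le_vol (hw : ∀ u v, 0 ≤ w u v) (P S : Finset V) : volIn w P S ≤ vol w S :=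
  sum_le_sum fun _ _ => sum_le_sum_of_subset_of_nonneg (subset_univ P) fun _ _ _ => hw _ _

theorem eW_univ_add_volIn_self (S : Finset V) : eW w S univ + volIn w S S = vol w S :=
  eW_add_volIn_self (subset_univ S)

theorem eW_univ_add_eW_univ_sdiff (hsym : ∀ u v, w u v = w v u) {S P : Finset V} (hSP : S ⊆ P) :
    eW w S univ + eW w (P \ S) univ = eW w P univ + 2 * eW w S P := by
  have hvol : vol w S + vol w (P \ S) = vol w P := volIn_add_volIn_sdiff hSP univ
  linarith [volIn_self_eq_add_two_mul_eW hsym hSP, eW_univ_add_volIn_self (w := w) S,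
    eW_univ_add_volIn_self (w := w) (P \ S), eW_univ_add_volIn_self (w := w) P]

theorem phi_nonneg (hw : ∀ u v, 0 ≤ w u v) (S : Finset V) : 0 ≤ phi w S :=
  div_nonneg (eW_nonneg hw S univ) (vol_nonneg hw S)

-- Also true when `vol w S = 0`, since then `eW w S univ = 0`.
theorem phi_mul_vol (hw : ∀ u v, 0 ≤ w u v) (S : Finset V) :
    phi w S * vol w S = eW w S univ :=
  div_mul_cancel_of_imp fun hvol => by
    linarith [eW_nonneg hw S univ, volIn_nonneg hw S S, eW_univ_add_volIn_self (w := w) S]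

theorem two_mul_eW_eq (hsym : ∀ u v, w u v = w v u) (hw : ∀ u v, 0 ≤ w u v) {S P : Finset V}
    (hSP : S ⊆ P) :
    2 * eW w S P =
      (phi w S - phi w P) * vol w S + (phi w (P \ S) - phi w P) * vol w (P \ S) := by
  have hvol : vol w S + vol w (P \ S) = vol w P := volIn_add_volIn_sdiff hSP univ
  have hcut := eW_univ_add_eW_univ_sdiff hsym hSP
  rw [← phi_mul_vol hw S, ← phi_mul_vol hw (P \ S), ← phi_mul_vol hw P, ← hvol] at hcut
  linarith

theorem max_phi_sub_phi_mul_volIn_le (hsym : ∀ u v, w u v = w v u) (hw : ∀ u v, 0 ≤ w u v)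
    {S P : Finset V} (hSP : S ⊆ P) (hS : phi w P ≤ phi w S) (hT : phi w P ≤ phi w (P \ S))
    (hhalf : volIn w P S ≤ volIn w P P / 2) :
    (max (phi w S) (phi w (P \ S)) - phi w P) * volIn w P S ≤ 2 * eW w S P := by
  have hvolS : volIn w P S ≤ vol w S := volIn_le_vol hw P S
  have hvolT : volIn w P S ≤ vol w (P \ S) := by
    linarith [volIn_add_volIn_sdiff (w := w) hSP P, volIn_le_vol hw P (P \ S)]
  have hS₀ := sub_nonneg.2 hS
  have hT₀ := sub_nonneg.2 hT
  rw [two_mul_eW_eq hsym hw hSP]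
  rcases max_choice (phi w S) (phi w (P \ S)) with hmax | hmax <;> rw [hmax]
  · linarith [mul_le_mul_of_nonneg_left hvolS hS₀, mul_nonneg hT₀ (vol_nonneg hw (P \ S))]
  · linarith [mul_le_mul_of_nonneg_left hvolT hT₀, mul_nonneg hS₀ (vol_nonneg hw S)]

end Conductance

/-- A packing: a family of pairwise disjoint nonempty sets, as in the definition of `ρ`. -/
structure IsPacking {ι V : Type*} (A : ι → Finset V) : Prop where
  nonempty : ∀ i, (A i).Nonempty
  disjoint : ∀ i j, i ≠ j → Disjoint (A i) (A j)

theorem exists_isPacking {V : Type*} [Fintype V] {k : ℕ} (hk : k ≤ Fintype.card V) :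
    ∃ A : Fin k → Finset V, IsPacking A := by
  obtain ⟨f⟩ : Nonempty (Fin k ↪ V) :=
    Function.Embedding.nonempty_of_card_le (by simpa using hk)
  exact ⟨fun i => {f i}, fun i => singleton_nonempty (f i),
    fun i j hij => disjoint_singleton.2 (f.injective.ne hij)⟩

namespace IsPacking

theorem update {ι V : Type*} [DecidableEq ι] {A : ι → Finset V} (hA : IsPacking A) {i : ι}
    {S : Finset V} (hS : S.Nonempty) (hSA : S ⊆ A i) : IsPacking (Function.update A i S) where
  nonempty := (Function.forall_update_iff A fun _ B => B.Nonempty).2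
    ⟨hS, fun j _ => hA.nonempty j⟩
  disjoint j l hjl :=
    have hle : Function.update A i S ≤ A := update_le_self_iff.2 hSA
    (hA.disjoint j l hjl).mono (hle j) (hle l)

theorem cons {V : Type*} {k : ℕ} {A : Fin k → Finset V} (hA : IsPacking A) {S : Finset V}
    (hS : S.Nonempty) (hSA : ∀ i, Disjoint S (A i)) :
    IsPacking (Fin.cons S A : Fin (k + 1) → Finset V) where
  nonempty := Fin.cases hS hA.nonempty
  disjoint i j hij := by
    cases i using Fin.cases with
    | zero =>
      cases j using Fin.cases with
      | zero => exact absurd rfl hij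
      | succ j => exact hSA j
    | succ i =>
      cases j using Fin.cases with
      | zero => exact (hSA i).symm
      | succ j => exact hA.disjoint i j fun h => hij (congrArg Fin.succ h)

theorem split {V : Type*} [DecidableEq V] {k : ℕ} {A : Fin k → Finset V} (hA : IsPacking A)
    {i : Fin k} {S : Finset V} (hS : S.Nonempty) (hSA : S ⊂ A i) :
    IsPacking (Fin.cons S (Function.update A i (A i \ S)) : Fin (k + 1) → Finset V) := by
  refine (hA.update (sdiff_nonempty.2 hSA.not_subset) sdiff_subset).cons hS ?_
  exact (Function.forall_update_iff A fun _ B => Disjoint S B).2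
    ⟨disjoint_sdiff, fun j hj => (hA.disjoint i j hj.symm).mono_left hSA.subset⟩

end IsPacking

section Rho

variable {V : Type*} [Fintype V] [DecidableEq V] {w : V → V → ℝ} {k : ℕ}

theorem rho_eq_sInf_image :
    rho w k = sInf ((fun A : Fin k → Finset V => ⨆ i, phi w (A i)) '' {A | IsPacking A}) := by
  unfold rho
  congr 1
  ext r
  exact ⟨fun ⟨A, hne, hdisj, hr⟩ => ⟨A, ⟨hne, hdisj⟩, hr.symm⟩,
    fun ⟨A, hA, hr⟩ => ⟨A, hA.nonempty, hA.disjoint, hr.symm⟩⟩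

theorem rho_nonneg (hw : ∀ u v, 0 ≤ w u v) : 0 ≤ rho w k := by
  rw [rho_eq_sInf_image]
  refine Real.sInf_nonneg ?_
  rintro _ ⟨A, -, rfl⟩
  exact Real.iSup_nonneg fun i => phi_nonneg hw (A i)

theorem exists_isPacking_phi_le_rho (hk : k ≤ Fintype.card V) :
    ∃ A : Fin k → Finset V, IsPacking A ∧ ∀ i, phi w (A i) ≤ rho w k := by
  have hne : {A : Fin k → Finset V | IsPacking A}.Nonempty := exists_isPacking hk
  obtain ⟨A, hA, hrho⟩ := (hne.image fun A => ⨆ i, phi w (A i)).csInf_mem (Set.toFinite _)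
  refine ⟨A, hA, fun i => ?_⟩
  rw [rho_eq_sInf_image, ← hrho]
  exact le_ciSup (f := fun i => phi w (A i)) (Set.finite_range _).bddAbove i

theorem IsPacking.exists_rho_le_phi [NeZero k] {A : Fin k → Finset V} (hA : IsPacking A) :
    ∃ i, rho w k ≤ phi w (A i) := by
  obtain ⟨i, hi⟩ := exists_eq_ciSup_of_finite (f := fun i => phi w (A i))
  refine ⟨i, ?_⟩
  rw [rho_eq_sInf_image, hi]
  exact csInf_le (Set.toFinite _).bddBelow ⟨A, hA, rfl⟩

/-- A packing that is minimal for inclusion among the packings with all conductances at most `r`.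
Families are compared part by part, so that shrinking a single part yields a smaller family. -/
def IsMinimalPacking {ι : Type*} (w : V → V → ℝ) (r : ℝ) (A : ι → Finset V) : Prop :=
  Minimal (fun B : ι → Finset V => IsPacking B ∧ ∀ i, phi w (B i) ≤ r) A

theorem exists_isMinimalPacking (hk : k ≤ Fintype.card V) :
    ∃ A : Fin k → Finset V, IsMinimalPacking w (rho w k) A := by
  obtain ⟨A, hA⟩ := exists_isPacking_phi_le_rho (w := w) hk
  obtain ⟨B, -, hB⟩ := exists_minimal_le_of_wellFoundedLT
    (fun B : Fin k → Finset V => IsPacking B ∧ ∀ i, phi w (B i) ≤ rho w k) A hA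
  exact ⟨B, hB⟩

namespace IsMinimalPacking

variable {r : ℝ}

theorem lt_phi_of_ssubset {ι : Type*} {A : ι → Finset V} (hA : IsMinimalPacking w r A) {i : ι}
    {S : Finset V} (hS : S.Nonempty) (hSA : S ⊂ A i) : r < phi w S := by
  classical
  by_contra! hle
  have hupdate : ∀ j, phi w (Function.update A i S j) ≤ r :=
    (Function.forall_update_iff A fun _ B => phi w B ≤ r).2 ⟨hle, fun j _ => hA.prop.2 j⟩
  exact hA.not_prop_of_lt (update_lt_self_iff.2 hSA) ⟨hA.prop.1.update hS hSA.subset, hupdate⟩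

theorem rho_succ_le_max_phi {A : Fin k → Finset V} (hA : IsMinimalPacking w r A) {i : Fin k}
    {S : Finset V} (hS : S.Nonempty) (hSA : S ⊂ A i) :
    rho w (k + 1) ≤ max (phi w S) (phi w (A i \ S)) := by
  obtain ⟨j, hj⟩ := (hA.prop.1.split hS hSA).exists_rho_le_phi (w := w)
  cases j using Fin.cases with
  | zero => exact le_max_of_le_left hj
  | succ j =>
    rw [Fin.cons_succ] at hj
    rcases eq_or_ne j i with rfl | hji
    · rw [Function.update_self] at hj
      exact le_max_of_le_right hj
    · rw [Function.update_of_ne hji] at hj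
      have hlt : phi w (A j) < phi w S := (hA.prop.2 j).trans_lt (hA.lt_phi_of_ssubset hS hSA)
      exact le_max_of_le_left (hj.trans hlt.le)

theorem inCondGE {A : Fin k → Finset V} (hA : IsMinimalPacking w r A)
    (hsym : ∀ u v, w u v = w v u) (hw : ∀ u v, 0 ≤ w u v) (i : Fin k) :
    inCondGE w (A i) ((rho w (k + 1) - r) / 2) := by
  intro S hSA hS hne hhalf
  have hssub : S ⊂ A i := hSA.ssubset_of_ne hne
  have hsdiff : A i \ S ⊂ A i := sdiff_ssubset hSA hS
  have hphi : phi w (A i) ≤ r := hA.prop.2 i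
  have hphiS : phi w (A i) ≤ phi w S := hphi.trans (hA.lt_phi_of_ssubset hS hssub).le
  have hphiT : phi w (A i) ≤ phi w (A i \ S) :=
    hphi.trans (hA.lt_phi_of_ssubset (sdiff_nonempty.2 hssub.not_subset) hsdiff).le
  have hgap : (rho w (k + 1) - r) * volIn w (A i) S ≤ 2 * eW w S (A i) :=
    calc (rho w (k + 1) - r) * volIn w (A i) S
      _ ≤ (max (phi w S) (phi w (A i \ S)) - phi w (A i)) * volIn w (A i) S :=
          mul_le_mul_of_nonneg_right (sub_le_sub (hA.rho_succ_le_max_phi hS hssub) hphi)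
            (volIn_nonneg hw (A i) S)
      _ ≤ 2 * eW w S (A i) := max_phi_sub_phi_mul_volIn_le hsym hw hSA hphiS hphiT hhalf
  linarith

end IsMinimalPacking

end Rho

theorem mul_div_seven_le_half_sub {ε r r' : ℝ} (hε0 : 0 ≤ ε) (hε1 : ε ≤ 1) (hr' : 0 ≤ r')
    (hgap : (1 + ε) * r ≤ r') : ε * r' / 7 ≤ (r' - r) / 2 := by
  have hr : r ≤ r' / (1 + ε) := by
    rw [le_div_iff₀ (by linarith)]
    linarith
  have hquot : r' / (1 + ε) ≤ r' * (1 - 2 * ε / 7) := by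
    rw [div_le_iff₀ (by linarith)]
    linarith [mul_nonneg (mul_nonneg hr' hε0) (by linarith : 0 ≤ 5 - 2 * ε)]
  linarith

theorem stmt1_general {V : Type*} [Fintype V] [DecidableEq V] (w : V → V → ℝ)
    (hsym : ∀ u v, w u v = w v u) (hnonneg : ∀ u v, 0 ≤ w u v) (k : ℕ)
    (hcard : k + 1 ≤ Fintype.card V) :
    ∃ A : Fin k → Finset V, (∀ i, (A i).Nonempty) ∧
      (∀ i j, i ≠ j → Disjoint (A i) (A j)) ∧
      (∀ i, inCondGE w (A i) ((rho w (k + 1) - rho w k) / 2) ∧ phi w (A i) ≤ rho w k) := by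
  obtain ⟨A, hA⟩ := exists_isMinimalPacking (w := w) (Nat.le_of_succ_le hcard)
  exact ⟨A, hA.prop.1.nonempty, hA.prop.1.disjoint,
    fun i => ⟨hA.inCondGE hsym hnonneg i, hA.prop.2 i⟩⟩

theorem stmt1 {V : Type*} [Fintype V] [DecidableEq V] (w : V → V → ℝ)
    (hsym : ∀ u v, w u v = w v u) (hnonneg : ∀ u v, 0 ≤ w u v)
    (hdeg : ∀ v, 0 < deg w v) (k : ℕ) (hk : 1 ≤ k)
    (hcard : k + 1 ≤ Fintype.card V)
    (ε : ℝ) (hε0 : 0 < ε) (hε1 : ε < 1)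
    (hgap : (1 + ε) * rho w k < rho w (k + 1)) :
    ∃ A : Fin k → Finset V, (∀ i, (A i).Nonempty) ∧
      (∀ i j, i ≠ j → Disjoint (A i) (A j)) ∧
      (∀ i, inCondGE w (A i) (ε * rho w (k + 1) / 7) ∧
        phi w (A i) ≤ rho w k) := by
  obtain ⟨A, hne, hdisj, hA⟩ := stmt1_general w hsym hnonneg k hcard
  exact ⟨A, hne, hdisj, fun i => ⟨(hA i).1.mono hnonneg
    (mul_div_seven_le_half_sub hε0.le hε1.le (rho_nonneg hnonneg) hgap.le), (hA i).2⟩⟩
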